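/- Let u ≥ 3 be an integer and q = u−1. Then (i) Σ_{a+b=u, a≥2, b≥1} ζ(a,b,2) = ζ(u,2) + ζ(q,3) − ζ(q,2,1), and (ii) Σ_{b+c=u, b≥1, c≥1} ζ(2,b,c) = ζ(3,q) + ζ(2,u). -/

import Mathlib

/-- The multiple zeta value `ζ(s₁,…,s_d) = Σ_{k₁>⋯>k_d≥1} 1/(k₁^{s₁}⋯k_d^{s_d})`. -/
noncomputable def mzv {d : ℕ} (s : Fin d → ℕ) : ℝ :=
  ∑' k : {k : Fin d → ℕ // StrictAnti k ∧ ∀ i, 0 < k i},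
    ∏ i, (1 : ℝ) / (k.1 i : ℝ) ^ s i

open Finset in
theorem tsum_swap (f : ℕ → ℕ → ENNReal) :
    ∑' k, ∑ n ∈ range k, f k n = ∑' n, ∑' i, f (n + 1 + i) n := by
  have h1 : ∀ k, ∑ n ∈ range k, f k n = ∑' n, if n < k then f k n else 0 := by
    intro k
    rw [tsum_eq_sum (s := range k)]
    · exact Finset.sum_congr rfl fun n hn => by simp [Finset.mem_range.1 hn]
    · intro n hn
      simp at hn
      simp [hn]
  simp_rw [h1]
  rw [ENNReal.tsum_comm]
  congr 1
  ext n
  have hinj : Function.Injective fun i : ℕ => n + 1 + i := fun a b h => by simpa using h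
  rw [← hinj.tsum_eq]
  · congr 1
    ext i
    rw [if_pos (by omega)]
  · intro x hx
    simp only [Function.mem_support, ne_eq, ite_eq_right_iff, Classical.not_imp] at hx
    exact ⟨x - (n + 1), by have := hx.1; change n + 1 + (x - (n + 1)) = x; omega⟩

noncomputable def rr (n : ℕ) : ℝ := (n : ℝ)⁻¹

theorem rr_nonneg (n : ℕ) : 0 ≤ rr n := by unfold rr; positivity

theorem rr_zero : rr 0 = 0 := by simp [rr]

theorem rr_le_one (n : ℕ) : rr n ≤ 1 := by
  rcases Nat.eq_zero_or_pos n with h | h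
  · simp [h, rr]
  · unfold rr
    exact inv_le_one_of_one_le₀ (by exact_mod_cast h)

noncomputable def hh (n : ℕ) : ℝ := ∑ i ∈ Finset.range n, rr i

noncomputable def h2 (n : ℕ) : ℝ := ∑ i ∈ Finset.range n, rr i ^ 2

noncomputable def h3 (n : ℕ) : ℝ := ∑ i ∈ Finset.range n, rr i ^ 3

theorem hh_nonneg (n : ℕ) : 0 ≤ hh n := Finset.sum_nonneg fun i _ => rr_nonneg i

theorem h2_nonneg (n : ℕ) : 0 ≤ h2 n := Finset.sum_nonneg fun i _ => pow_nonneg (rr_nonneg i) _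

theorem h3_nonneg (n : ℕ) : 0 ≤ h3 n := Finset.sum_nonneg fun i _ => pow_nonneg (rr_nonneg i) _

noncomputable def Z2 (a b : ℕ) : ENNReal :=
  ∑' k, ∑ m ∈ Finset.range k, ENNReal.ofReal (rr k ^ a * rr m ^ b)

noncomputable def Z3 (a b c : ℕ) : ENNReal :=
  ∑' k, ∑ m ∈ Finset.range k, ∑ n ∈ Finset.range m,
    ENNReal.ofReal (rr k ^ a * rr m ^ b * rr n ^ c)

theorem range_tsum (k : ℕ) (f : ℕ → ENNReal) :
    ∑ n ∈ Finset.range k, f n = ∑' n, if n < k then f n else 0 := by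
  rw [tsum_eq_sum (s := Finset.range k)]
  · exact Finset.sum_congr rfl fun n hn => by simp [Finset.mem_range.1 hn]
  · intro n hn
    simp at hn
    simp [hn]

theorem mzv_toReal {d : ℕ} (s : Fin d → ℕ) :
    mzv s = (∑' k : {k : Fin d → ℕ // StrictAnti k ∧ ∀ i, 0 < k i},
      ENNReal.ofReal (∏ i, rr (k.1 i) ^ s i)).toReal := by
  rw [ENNReal.tsum_toReal_eq (fun _ => ENNReal.ofReal_ne_top)]
  unfold mzv
  congr 1
  ext k
  rw [ENNReal.toReal_ofReal (Finset.prod_nonneg fun i _ => pow_nonneg (rr_nonneg _) _)]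
  simp [rr]

theorem mzv_two (a b : ℕ) (hb : 1 ≤ b) : mzv ![a, b] = (Z2 a b).toReal := by
  rw [mzv_toReal]
  congr 1
  have := tsum_subtype {k : Fin 2 → ℕ | StrictAnti k ∧ ∀ i, 0 < k i}
    (fun k => ENNReal.ofReal (∏ i, rr (k i) ^ (![a, b] : Fin 2 → ℕ) i))
  refine this.trans ?_
  rw [← (finTwoArrowEquiv ℕ).symm.tsum_eq, ENNReal.tsum_prod']
  unfold Z2
  congr 1
  ext k
  rw [range_tsum]
  congr 1
  ext m
  have e : (finTwoArrowEquiv ℕ).symm (k, m) = ![k, m] := by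
    ext i; fin_cases i <;> rfl
  rw [e, Set.indicator_apply]
  by_cases hm : m = 0
  · subst hm
    simp [rr_zero, Fin.forall_fin_two, show b ≠ 0 by omega]
  · have : (![k, m] ∈ {k : Fin 2 → ℕ | StrictAnti k ∧ ∀ i, 0 < k i}) ↔ m < k := by
      simp only [Set.mem_ofPred_eq, Fin.forall_fin_two, StrictAnti]
      simp
      omega
    simp only [this]
    simp [Fin.prod_univ_two]

def e3 : (ℕ × ℕ × ℕ) ≃ (Fin 3 → ℕ) where
  toFun p := ![p.1, p.2.1, p.2.2]
  invFun f := (f 0, f 1, f 2)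
  left_inv p := by simp
  right_inv f := by ext i; fin_cases i <;> rfl

theorem mzv_three (a b c : ℕ) (hc : 1 ≤ c) : mzv ![a, b, c] = (Z3 a b c).toReal := by
  rw [mzv_toReal]
  congr 1
  have := tsum_subtype {k : Fin 3 → ℕ | StrictAnti k ∧ ∀ i, 0 < k i}
    (fun k => ENNReal.ofReal (∏ i, rr (k i) ^ (![a, b, c] : Fin 3 → ℕ) i))
  refine this.trans ?_
  rw [← e3.tsum_eq, ENNReal.tsum_prod']
  unfold Z3
  congr 1
  ext k
  rw [range_tsum, ENNReal.tsum_prod']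
  congr 1
  ext m
  rw [range_tsum]
  have : (if m < k then ∑' n, (if n < m then ENNReal.ofReal (rr k ^ a * rr m ^ b * rr n ^ c)
      else 0) else 0) = ∑' n, (if m < k then (if n < m then
        ENNReal.ofReal (rr k ^ a * rr m ^ b * rr n ^ c) else 0) else 0) := by
    split_ifs <;> simp
  rw [this]
  congr 1
  ext n
  have e : e3 (k, m, n) = ![k, m, n] := rfl
  rw [e, Set.indicator_apply]
  by_cases hn : n = 0
  · subst hn
    simp [rr_zero, Fin.forall_fin_succ, show c ≠ 0 by omega]
  · have : (![k, m, n] ∈ {k : Fin 3 → ℕ | StrictAnti k ∧ ∀ i, 0 < k i}) ↔ m < k ∧ n < m := by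
      simp only [Set.mem_ofPred_eq, Fin.forall_fin_succ, StrictAnti]
      simp
      omega
    simp only [this]
    simp [Fin.prod_univ_three, ite_and]

theorem hh_succ (n : ℕ) : hh (n + 1) = hh n + rr n := Finset.sum_range_succ _ _
theorem h2_succ (n : ℕ) : h2 (n + 1) = h2 n + rr n ^ 2 := Finset.sum_range_succ _ _
theorem h3_succ (n : ℕ) : h3 (n + 1) = h3 n + rr n ^ 3 := Finset.sum_range_succ _ _

theorem summable_r2 : Summable fun n => rr n ^ 2 := by
  simp [rr]

theorem r2_ne_top : ∑' n, ENNReal.ofReal (rr n ^ 2) ≠ ⊤ := summable_r2.tsum_ofReal_ne_top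

theorem hh_le (n : ℕ) : hh (n + 1) ≤ 2 * Real.sqrt n := by
  induction n with
  | zero => simp [hh, rr]
  | succ n ih =>
    rw [hh_succ]
    have h1 : rr (n + 1) ≤ 2 * Real.sqrt ((n + 1 : ℕ) : ℝ) - 2 * Real.sqrt n := by
      have ha : Real.sqrt n ≤ Real.sqrt ((n + 1 : ℕ) : ℝ) := Real.sqrt_le_sqrt (by simp)
      have hb : 1 ≤ Real.sqrt ((n + 1 : ℕ) : ℝ) := by
        rw [Real.one_le_sqrt]; push_cast; linarith [Nat.cast_nonneg (α := ℝ) n]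
      have hc := Real.sq_sqrt (Nat.cast_nonneg (α := ℝ) n)
      have hd := Real.sq_sqrt (Nat.cast_nonneg (α := ℝ) (n + 1))
      have he := Real.sqrt_nonneg (n : ℝ)
      have hf : ((n + 1 : ℕ) : ℝ) = n + 1 := by push_cast; ring
      unfold rr
      rw [inv_le_iff_one_le_mul₀ (by positivity)]
      set x := Real.sqrt n
      set y := Real.sqrt ((n + 1 : ℕ) : ℝ)
      rw [← hd]
      have hg : (y - x) * (y + x) = 1 := by nlinarith
      have h0 : 0 ≤ y - x := by linarith
      have : 2 * y * (y - x) ≥ 1 := by nlinarith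
      nlinarith
    linarith

theorem FH : ∑' n, ENNReal.ofReal (rr n ^ 2 * hh (n + 1)) ≠ ⊤ := by
  apply Summable.tsum_ofReal_ne_top
  have := (Real.summable_nat_rpow_inv.2 (show (1:ℝ) < 3 / 2 by norm_num)).mul_left 2
  refine Summable.of_nonneg_of_le
    (fun n => mul_nonneg (pow_nonneg (rr_nonneg _) _) (hh_nonneg _)) (fun n => ?_) this
  rcases Nat.eq_zero_or_pos n with h | h
  · subst h; simp [rr]
  · have hn : (0:ℝ) < n := by exact_mod_cast h
    calc rr n ^ 2 * hh (n + 1) ≤ rr n ^ 2 * (2 * Real.sqrt n) :=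
          mul_le_mul_of_nonneg_left (hh_le n) (pow_nonneg (rr_nonneg _) _)
      _ = 2 * ((n:ℝ) ^ (3/2:ℝ))⁻¹ := by
        rw [show (3/2:ℝ) = 2 - 1/2 by norm_num, Real.rpow_sub hn, ← Real.sqrt_eq_rpow, inv_div]
        unfold rr
        rw [show (n:ℝ) ^ (2:ℝ) = (n:ℝ)^(2:ℕ) by exact_mod_cast Real.rpow_natCast (n:ℝ) 2]
        field_simp

theorem r_pow_le (n a : ℕ) (ha : 2 ≤ a) : rr n ^ a ≤ rr n ^ 2 :=
  pow_le_pow_of_le_one (rr_nonneg n) (rr_le_one n) ha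

theorem Z2_ne_top (a b : ℕ) (ha : 2 ≤ a) (hb : 2 ≤ b) : Z2 a b ≠ ⊤ := by
  have : Z2 a b ≤ ∑' k, ENNReal.ofReal (rr k ^ 2) * ∑' n, ENNReal.ofReal (rr n ^ 2) := by
    refine ENNReal.tsum_le_tsum fun k => ?_
    refine le_trans ?_ (mul_le_mul_right (ENNReal.sum_le_tsum (Finset.range k)) _)
    rw [Finset.mul_sum]
    refine Finset.sum_le_sum fun m _ => ?_
    rw [← ENNReal.ofReal_mul (pow_nonneg (rr_nonneg _) _)]
    exact ENNReal.ofReal_le_ofReal (mul_le_mul (r_pow_le _ _ ha) (r_pow_le _ _ hb)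
      (pow_nonneg (rr_nonneg _) _) (pow_nonneg (rr_nonneg _) _))
  rw [ENNReal.tsum_mul_right] at this
  exact ne_top_of_le_ne_top (ENNReal.mul_ne_top r2_ne_top r2_ne_top) this

theorem hasSum_tel (m : ℕ) : HasSum (fun i => rr (m + 1 + i) - rr (m + 2 + i)) (rr (m + 1)) := by
  rw [hasSum_iff_tendsto_nat_of_nonneg]
  · have h1 : ∀ n, ∑ i ∈ Finset.range n, (rr (m + 1 + i) - rr (m + 2 + i))
        = rr (m + 1) - rr (m + 1 + n) := by
      intro n
      have := Finset.sum_range_sub' (fun i => rr (m + 1 + i)) n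
      rw [add_zero] at this
      rw [← this]
      refine Finset.sum_congr rfl fun i _ => ?_
      rw [show m + 1 + (i + 1) = m + 2 + i by ring]
    simp_rw [h1]
    have h2 : Filter.Tendsto (fun n : ℕ => rr (m + 1 + n)) Filter.atTop (nhds 0) := by
      have := (tendsto_inv_atTop_nhds_zero_nat (𝕜 := ℝ)).comp (Filter.tendsto_add_atTop_nat (m + 1))
      refine this.congr fun n => ?_
      simp only [Function.comp, rr]
      rw [add_comm]
    simpa using h2.const_sub (rr (m + 1))
  · intro i
    unfold rr
    rw [sub_nonneg]
    apply inv_anti₀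
    · positivity
    · push_cast; linarith

theorem hasSum_hh (m : ℕ) : HasSum (fun i => rr (i + 1) - rr (m + 1 + i)) (hh (m + 1)) := by
  induction m with
  | zero =>
    have : (fun i => rr (i + 1) - rr (0 + 1 + i)) = fun _ => 0 := by
      ext i; rw [show 0 + 1 + i = i + 1 by ring]; ring
    rw [this]
    simp [hh, rr]
  | succ m ih =>
    have := ih.add (hasSum_tel m)
    rw [hh_succ]
    convert this using 2
    rw [show m + 1 + 1 = m + 2 by ring]
    ring

theorem rr_rel (m i : ℕ) (hm : 1 ≤ m) :
    rr (m + 1 + i) * rr m = rr (i + 1) * (rr m - rr (m + 1 + i)) := by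
  have : (0:ℝ) < m := by exact_mod_cast hm
  unfold rr
  push_cast
  field_simp
  ring

theorem L1 (m : ℕ) (hm : 1 ≤ m) :
    ∑' i, ENNReal.ofReal (rr (m + 1 + i) * rr (i + 1)) = ENNReal.ofReal (rr m * hh (m + 1)) := by
  have h := (hasSum_hh m).mul_left (rr m)
  have e : (fun i => rr m * (rr (i + 1) - rr (m + 1 + i)))
      = fun i => rr (m + 1 + i) * rr (i + 1) := by
    ext i
    have : (0:ℝ) < m := by exact_mod_cast hm
    unfold rr
    push_cast
    field_simp
    ring
  rw [e] at h
  rw [← h.tsum_eq, ENNReal.ofReal_tsum_of_nonneg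
    (fun i => mul_nonneg (rr_nonneg _) (rr_nonneg _)) h.summable]

noncomputable def TT (s l : ℕ) : ENNReal := ∑' i, ENNReal.ofReal (rr (l + 1 + i) ^ s)

theorem L2 (l : ℕ) (hl : 1 ≤ l) :
    ∑' j, ENNReal.ofReal (rr (l + 1 + j) ^ 2 * rr (j + 1)) + ENNReal.ofReal (rr l) * TT 2 l
      = ENNReal.ofReal (rr l ^ 2 * hh (l + 1)) := by
  rw [pow_two, mul_assoc, ENNReal.ofReal_mul (rr_nonneg _), ← L1 l hl, TT,
    ← ENNReal.tsum_mul_left, ← ENNReal.tsum_mul_left, ← ENNReal.tsum_add]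
  congr 1
  ext j
  have n1 := rr_nonneg l
  have n2 := rr_nonneg (l + 1 + j)
  have n3 := rr_nonneg (j + 1)
  rw [← ENNReal.ofReal_mul n1, ← ENNReal.ofReal_mul n1,
    ← ENNReal.ofReal_add (by positivity) (by positivity)]
  congr 1
  linear_combination (rr (l + 1 + j)) * rr_rel l j hl

theorem geom (x y d : ℝ) (h : x * y = d * (y - x)) (p : ℕ) :
    ∑ b ∈ Finset.Icc 1 p, x ^ b * y ^ (p + 1 - b) + x ^ p * d = y ^ p * d := by
  induction p with
  | zero => simp
  | succ p ih =>
    rw [Finset.sum_Icc_succ_top (by omega)]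
    have : ∑ b ∈ Finset.Icc 1 p, x ^ b * y ^ (p + 1 + 1 - b)
        = y * ∑ b ∈ Finset.Icc 1 p, x ^ b * y ^ (p + 1 - b) := by
      rw [Finset.mul_sum]
      refine Finset.sum_congr rfl fun b hb => ?_
      simp at hb
      rw [show p + 1 + 1 - b = (p + 1 - b) + 1 by omega]
      ring
    rw [this, show p + 1 + 1 - (p + 1) = 1 by omega]
    linear_combination y * ih + x ^ p * h

noncomputable def cc (k : ℕ) : ℝ := ∑ m ∈ Finset.range k, h2 m * rr (k - m)
noncomputable def aa (k : ℕ) : ℝ := ∑ m ∈ Finset.range k, hh m * rr m ^ 2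

theorem refl_sum (k : ℕ) : ∑ m ∈ Finset.range k, rr (k - m) = hh (k + 1) := by
  rw [hh, Finset.sum_range_succ', rr_zero, add_zero, ← Finset.sum_range_reflect]
  refine Finset.sum_congr rfl fun m hm => ?_
  simp at hm
  congr 1
  omega

theorem cc_succ (k : ℕ) : cc (k + 1) = cc k + rr k * h2 k + 2 * rr k ^ 2 * hh k := by
  have h1 : cc (k + 1) = cc k + ∑ m ∈ Finset.range k, rr m ^ 2 * rr (k - m) := by
    unfold cc
    rw [Finset.sum_range_succ', ← Finset.sum_add_distrib]
    simp only [h2_succ]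
    rw [show h2 0 = 0 by simp [h2], zero_mul, add_zero]
    refine Finset.sum_congr rfl fun m hm => ?_
    rw [show k + 1 - (m + 1) = k - m by omega]
    ring
  rw [h1]
  rcases k with _ | k
  · simp [rr, h2, hh]
  have h3 : ∑ m ∈ Finset.range (k + 1), rr m ^ 2 * rr (k + 1 - m)
      = ∑ m ∈ Finset.range k, (rr (k + 1) * rr (m + 1) ^ 2 + rr (k + 1) ^ 2 * rr (m + 1)
        + rr (k + 1) ^ 2 * rr (k - m)) := by
    rw [Finset.sum_range_succ', rr_zero]
    simp only [ne_eq, OfNat.ofNat_ne_zero, not_false_eq_true, zero_pow, zero_mul, add_zero]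
    refine Finset.sum_congr rfl fun m hm => ?_
    simp at hm
    obtain ⟨j, rfl⟩ : ∃ j, k = m + 1 + j := ⟨k - (m + 1), by omega⟩
    rw [show m + 1 + j + 1 - (m + 1) = j + 1 by omega, show m + 1 + j - m = j + 1 by omega]
    unfold rr
    push_cast
    field_simp
    ring
  rw [h3, Finset.sum_add_distrib, Finset.sum_add_distrib, ← Finset.mul_sum, ← Finset.mul_sum,
    ← Finset.mul_sum, refl_sum]
  have e1 : h2 (k + 1) = ∑ m ∈ Finset.range k, rr (m + 1) ^ 2 := by
    rw [h2, Finset.sum_range_succ', rr_zero]; simp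
  have e2 : hh (k + 1) = ∑ m ∈ Finset.range k, rr (m + 1) := by
    rw [hh, Finset.sum_range_succ', rr_zero]; simp
  rw [← e1, ← e2]
  ring

theorem L3 (k : ℕ) : h2 k * hh (k + 1) + aa k = cc k + (rr k * h2 k + h3 k) := by
  rw [hh_succ]
  suffices h2 k * hh k + aa k = cc k + h3 k by linear_combination this
  induction k with
  | zero => simp [h2, hh, aa, cc, h3]
  | succ k ih =>
    rw [cc_succ, h2_succ, hh_succ, h3_succ, show aa (k + 1) = aa k + hh k * rr k ^ 2 from
      Finset.sum_range_succ _ _]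
    linear_combination ih

theorem aa_nonneg (k : ℕ) : 0 ≤ aa k :=
  Finset.sum_nonneg fun _ _ => mul_nonneg (hh_nonneg _) (pow_nonneg (rr_nonneg _) _)
theorem cc_nonneg (k : ℕ) : 0 ≤ cc k :=
  Finset.sum_nonneg fun _ _ => mul_nonneg (h2_nonneg _) (rr_nonneg _)

theorem h2_le (n : ℕ) : h2 n ≤ ∑' n, rr n ^ 2 :=
  summable_r2.sum_le_tsum _ fun _ _ => pow_nonneg (rr_nonneg _) _

theorem Z3_two (a b : ℕ) : Z3 a b 2
    = ∑' k, ∑ m ∈ Finset.range k, ENNReal.ofReal (rr k ^ a * rr m ^ b * h2 m) := by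
  unfold Z3
  congr 1; ext k
  refine Finset.sum_congr rfl fun m _ => ?_
  have n1 := rr_nonneg k
  have n2 := rr_nonneg m
  rw [h2, Finset.mul_sum, ENNReal.ofReal_sum_of_nonneg]
  intro n _
  have n3 := rr_nonneg n
  positivity

theorem part1 (q : ℕ) (hq : 2 ≤ q) :
    ∑ a ∈ Finset.Icc 2 q, Z3 a (q + 1 - a) 2 + Z3 q 2 1 = Z2 (q + 1) 2 + Z2 q 3 := by
  set B := ∑' k, ∑ m ∈ Finset.range k,
    ENNReal.ofReal (h2 m * rr m ^ (q - 1) * (rr k * rr (k - m))) with hB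
  set C := ∑' k, ∑ m ∈ Finset.range k, ENNReal.ofReal (h2 m * rr k ^ q * rr (k - m)) with hC
  have s1 : ∑ a ∈ Finset.Icc 2 q, Z3 a (q + 1 - a) 2 + C = B := by
    simp_rw [Z3_two]
    rw [← Summable.tsum_finsetSum (fun _ _ => ENNReal.summable), hC, hB, ← ENNReal.tsum_add]
    congr 1; ext k
    rw [Finset.sum_comm, ← Finset.sum_add_distrib]
    refine Finset.sum_congr rfl fun m hm => ?_
    have n1 := rr_nonneg k
    have n2 := rr_nonneg m
    have n3 := h2_nonneg m
    have n4 := rr_nonneg (k - m)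
    rw [← ENNReal.ofReal_sum_of_nonneg (fun _ _ => by positivity),
      ← ENNReal.ofReal_add (Finset.sum_nonneg fun _ _ => by positivity) (by positivity)]
    congr 1
    rcases Nat.eq_zero_or_pos m with h0 | h0
    · subst h0; simp [h2]
    simp at hm
    obtain ⟨i, rfl⟩ : ∃ i, k = m + 1 + i := ⟨k - (m + 1), by omega⟩
    rw [show m + 1 + i - m = i + 1 by omega]
    obtain ⟨p, rfl⟩ : ∃ p, q = p + 1 := ⟨q - 1, by omega⟩
    have g := geom _ _ _ (rr_rel m i h0) p
    have e : ∑ a ∈ Finset.Icc 2 (p + 1), rr (m + 1 + i) ^ a * rr m ^ (p + 1 + 1 - a) * h2 m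
        = rr (m + 1 + i) * h2 m *
          ∑ b ∈ Finset.Icc 1 p, rr (m + 1 + i) ^ b * rr m ^ (p + 1 - b) := by
      rw [Finset.mul_sum, ← Finset.map_add_right_Icc 1 p 1, Finset.sum_map]
      refine Finset.sum_congr rfl fun b hb => ?_
      simp only [addRightEmbedding_apply]
      rw [show p + 1 + 1 - (b + 1) = p + 1 - b by omega]
      ring
    rw [e, show p + 1 - 1 = p by omega]
    linear_combination rr (m + 1 + i) * h2 m * g
  have s2 : B = ∑' m, ENNReal.ofReal (rr m ^ q * (h2 m * hh (m + 1))) := by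
    rw [hB, tsum_swap]
    congr 1; ext m
    rcases Nat.eq_zero_or_pos m with h0 | h0
    · subst h0; simp [h2]
    have n2 := rr_nonneg m
    have n3 := h2_nonneg m
    have : ∀ i, ENNReal.ofReal (h2 m * rr m ^ (q - 1) * (rr (m + 1 + i) * rr (m + 1 + i - m)))
        = ENNReal.ofReal (h2 m * rr m ^ (q - 1)) *
          ENNReal.ofReal (rr (m + 1 + i) * rr (i + 1)) := by
      intro i
      rw [← ENNReal.ofReal_mul (by positivity), show m + 1 + i - m = i + 1 by omega]
    simp_rw [this]
    rw [ENNReal.tsum_mul_left, L1 m h0, ← ENNReal.ofReal_mul (by positivity)]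
    congr 1
    obtain ⟨p, rfl⟩ : ∃ p, q = p + 1 := ⟨q - 1, by omega⟩
    rw [show p + 1 - 1 = p by omega]
    ring
  have s3 : C = ∑' k, ENNReal.ofReal (rr k ^ q * cc k) := by
    rw [hC]
    congr 1; ext k
    have n1 := rr_nonneg k
    rw [cc, Finset.mul_sum, ENNReal.ofReal_sum_of_nonneg]
    · refine Finset.sum_congr rfl fun m hm => ?_
      congr 1; ring
    · intro m _
      have n3 := h2_nonneg m
      have n4 := rr_nonneg (k - m)
      positivity
  have s4 : B ≠ ⊤ := by
    have : B ≤ ∑' m, ENNReal.ofReal (∑' n, rr n ^ 2) *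
        ENNReal.ofReal (rr m ^ 2 * hh (m + 1)) := by
      rw [s2]
      refine ENNReal.tsum_le_tsum fun m => ?_
      have n2 := rr_nonneg m
      have n3 := h2_nonneg m
      have n4 := hh_nonneg (m + 1)
      have n5 := h2_le m
      rw [← ENNReal.ofReal_mul (n3.trans n5)]
      apply ENNReal.ofReal_le_ofReal
      calc rr m ^ q * (h2 m * hh (m + 1)) ≤ rr m ^ 2 * ((∑' n, rr n ^ 2) * hh (m + 1)) := by
            refine mul_le_mul (r_pow_le m q hq) (mul_le_mul_of_nonneg_right n5 n4) ?_ ?_ <;>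
              positivity
        _ = _ := by ring
    rw [ENNReal.tsum_mul_left] at this
    exact ne_top_of_le_ne_top (ENNReal.mul_ne_top ENNReal.ofReal_ne_top FH) this
  have s5 : Z3 q 2 1 = ∑' k, ENNReal.ofReal (rr k ^ q * aa k) := by
    unfold Z3
    congr 1; ext k
    have n1 := rr_nonneg k
    rw [aa, Finset.mul_sum, ENNReal.ofReal_sum_of_nonneg]
    · refine Finset.sum_congr rfl fun m hm => ?_
      have n2 := rr_nonneg m
      rw [hh, Finset.sum_mul, Finset.mul_sum, ENNReal.ofReal_sum_of_nonneg]
      · refine Finset.sum_congr rfl fun n hn => ?_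
        congr 1; ring
      · intro n _
        have n3 := rr_nonneg n
        positivity
    · intro m _
      have n3 := hh_nonneg m
      have n4 := rr_nonneg m
      positivity
  have s6 : Z2 (q + 1) 2 + Z2 q 3 = ∑' k, ENNReal.ofReal (rr k ^ q * (rr k * h2 k + h3 k)) := by
    unfold Z2
    rw [← ENNReal.tsum_add]
    congr 1; ext k
    have n1 := rr_nonneg k
    rw [← ENNReal.ofReal_sum_of_nonneg, ← ENNReal.ofReal_sum_of_nonneg, ← ENNReal.ofReal_add,
      ← Finset.mul_sum, ← Finset.mul_sum]
    · congr 1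
      change rr k ^ (q + 1) * h2 k + rr k ^ q * h3 k = _
      ring
    all_goals first
      | (refine Finset.sum_nonneg fun n _ => ?_
         have n3 := rr_nonneg n
         positivity)
      | (intro n _
         have n3 := rr_nonneg n
         positivity)
  have s7 : B + Z3 q 2 1 = C + (Z2 (q + 1) 2 + Z2 q 3) := by
    rw [s2, s5, s3, s6, ← ENNReal.tsum_add, ← ENNReal.tsum_add]
    congr 1; ext k
    have n1 := rr_nonneg k
    have n2 := h2_nonneg k
    have n3 := h3_nonneg k
    have n4 := hh_nonneg (k + 1)
    have n5 := aa_nonneg k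
    have n6 := cc_nonneg k
    rw [← ENNReal.ofReal_add (by positivity) (by positivity),
      ← ENNReal.ofReal_add (by positivity) (by positivity), ← mul_add, ← mul_add, L3]
  have hCt : C ≠ ⊤ := ne_top_of_le_ne_top s4 (by rw [← s1]; exact le_add_self)
  rw [← s1] at s7
  refine (ENNReal.add_right_inj hCt).1 ?_
  rw [← s7]
  ring

theorem L4 (n : ℕ) : ∑' i, ENNReal.ofReal (rr (n + 1 + i)) * TT 2 (n + 1 + i)
      + ENNReal.ofReal (hh (n + 1)) * TT 2 n
    = ∑' k, ENNReal.ofReal (rr (n + 1 + k) ^ 2 * hh (n + 1 + k)) := by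
  have e : ∀ k, ENNReal.ofReal (rr (n + 1 + k) ^ 2 * hh (n + 1 + k))
      = ∑ j ∈ Finset.range k, ENNReal.ofReal (rr (n + 1 + j) * rr (n + 1 + k) ^ 2)
        + ENNReal.ofReal (hh (n + 1)) * ENNReal.ofReal (rr (n + 1 + k) ^ 2) := by
    intro k
    have n1 := rr_nonneg (n + 1 + k)
    have n2 := hh_nonneg (n + 1)
    have n3 : ∀ j, 0 ≤ rr (n + 1 + j) * rr (n + 1 + k) ^ 2 := fun j =>
      mul_nonneg (rr_nonneg _) (pow_nonneg n1 _)
    rw [← ENNReal.ofReal_mul n2, ← ENNReal.ofReal_sum_of_nonneg (fun j _ => n3 j),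
      ← ENNReal.ofReal_add (Finset.sum_nonneg fun j _ => n3 j) (by positivity), hh,
      Finset.sum_range_add, ← Finset.sum_mul]
    congr 1
    rw [hh]
    ring
  simp_rw [e]
  rw [ENNReal.tsum_add, tsum_swap, ENNReal.tsum_mul_left]
  congr 1
  congr 1; ext i
  rw [TT, ← ENNReal.tsum_mul_left]
  congr 1; ext j
  rw [← ENNReal.ofReal_mul (rr_nonneg _)]
  rw [show n + 1 + (i + 1 + j) = n + 1 + i + 1 + j by ring]

theorem tail_ne_top (n : ℕ) (f : ℕ → ENNReal) (hf : ∑' k, f k ≠ ⊤) :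
    ∑' k, f (n + 1 + k) ≠ ⊤ :=
  ne_top_of_le_ne_top hf (ENNReal.tsum_comp_le_tsum_of_injective
    (f := fun k : ℕ => n + 1 + k) (fun a b h => by simpa using h) f)

theorem FF (n : ℕ) :
    ∑' j, ∑' i, ENNReal.ofReal (rr (n + 1 + j + 1 + i) ^ 2 * rr (j + 1))
      = ENNReal.ofReal (hh (n + 1)) * TT 2 n + TT 3 n := by
  set P := ∑' i, ENNReal.ofReal (rr (n + 1 + i)) * TT 2 (n + 1 + i) with hP
  have hS : ∑' i, ENNReal.ofReal (rr (n + 1 + i) ^ 2 * hh (n + 1 + i + 1))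
      = ∑' k, ENNReal.ofReal (rr (n + 1 + k) ^ 2 * hh (n + 1 + k)) + TT 3 n := by
    rw [TT, ← ENNReal.tsum_add]
    congr 1; ext i
    have n1 := rr_nonneg (n + 1 + i)
    have n2 := hh_nonneg (n + 1 + i)
    rw [← ENNReal.ofReal_add (by positivity) (by positivity), hh_succ]
    congr 1; ring
  have h1 : ∑' j, ∑' i, ENNReal.ofReal (rr (n + 1 + j + 1 + i) ^ 2 * rr (j + 1)) + P
      = ∑' i, ENNReal.ofReal (rr (n + 1 + i) ^ 2 * hh (n + 1 + i + 1)) := by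
    rw [ENNReal.tsum_comm, hP, ← ENNReal.tsum_add]
    congr 1; ext i
    rw [← L2 _ (by omega)]
    congr 1
    congr 1; ext j
    rw [show n + 1 + j + 1 + i = n + 1 + i + 1 + j by ring]
  have h4 := L4 n
  have hT : ∑' i, ENNReal.ofReal (rr (n + 1 + i) ^ 2 * hh (n + 1 + i + 1)) ≠ ⊤ :=
    tail_ne_top n _ FH
  have hPt : P ≠ ⊤ := ne_top_of_le_ne_top hT (by rw [← h1]; exact le_add_self)
  rw [hS, ← h4, ← hP] at h1
  refine (ENNReal.add_left_inj hPt).1 ?_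
  rw [h1]
  ring

theorem Z2_swap (a b : ℕ) : Z2 a b = ∑' n, ENNReal.ofReal (rr n ^ b) * TT a n := by
  rw [Z2, tsum_swap]
  congr 1; ext n
  rw [TT, ← ENNReal.tsum_mul_left]
  congr 1; ext i
  rw [← ENNReal.ofReal_mul (pow_nonneg (rr_nonneg _) _), mul_comm]

theorem part2 (q : ℕ) (hq : 2 ≤ q) :
    ∑ b ∈ Finset.Icc 1 q, Z3 2 b (q + 1 - b) = Z2 3 q + Z2 2 (q + 1) := by
  set B := ∑' k, ∑ m ∈ Finset.range k, ∑ n ∈ Finset.range m,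
    ENNReal.ofReal (rr k ^ 2 * rr n ^ q * rr (m - n)) with hB
  set C := ∑' k, ∑ m ∈ Finset.range k, ∑ n ∈ Finset.range m,
    ENNReal.ofReal (rr k ^ 2 * rr m ^ q * (if n = 0 then 0 else rr (m - n))) with hC
  have n0 : ∀ m n, 0 ≤ (if n = 0 then 0 else rr (m - n)) := by
    intro m n
    split_ifs
    · exact le_rfl
    · exact rr_nonneg _
  have s1 : ∑ b ∈ Finset.Icc 1 q, Z3 2 b (q + 1 - b) + C = B := by
    simp_rw [Z3]
    rw [← Summable.tsum_finsetSum (fun _ _ => ENNReal.summable), hC, hB, ← ENNReal.tsum_add]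
    congr 1; ext k
    rw [Finset.sum_comm, ← Finset.sum_add_distrib]
    refine Finset.sum_congr rfl fun m hm => ?_
    rw [Finset.sum_comm, ← Finset.sum_add_distrib]
    refine Finset.sum_congr rfl fun n hn => ?_
    have n1 := rr_nonneg k
    have n2 := rr_nonneg m
    have n3 := rr_nonneg n
    have n4 := n0 m n
    rw [← ENNReal.ofReal_sum_of_nonneg (fun _ _ => by positivity),
      ← ENNReal.ofReal_add (Finset.sum_nonneg fun _ _ => by positivity)
        (mul_nonneg (by positivity) n4)]
    congr 1
    rcases Nat.eq_zero_or_pos n with h0 | h0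
    · subst h0
      rw [Finset.sum_eq_zero]
      · simp [rr_zero, show q ≠ 0 by omega]
      · intro b hb
        simp at hb
        simp [rr_zero, show q + 1 - b ≠ 0 by omega]
    simp at hn
    obtain ⟨i, rfl⟩ : ∃ i, m = n + 1 + i := ⟨m - (n + 1), by omega⟩
    rw [show n + 1 + i - n = i + 1 by omega, if_neg (by omega)]
    have g := geom _ _ _ (rr_rel n i h0) q
    simp_rw [mul_assoc]
    rw [← Finset.mul_sum]
    linear_combination rr k ^ 2 * g
  have s2 : B = ∑' n, ENNReal.ofReal (rr n ^ q) *
      (ENNReal.ofReal (hh (n + 1)) * TT 2 n + TT 3 n) := by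
    rw [hB, tsum_swap]
    have e : ∀ m, ∑' i, ∑ n ∈ Finset.range m,
        ENNReal.ofReal (rr (m + 1 + i) ^ 2 * rr n ^ q * rr (m - n))
        = ∑ n ∈ Finset.range m, ∑' i,
          ENNReal.ofReal (rr (m + 1 + i) ^ 2 * rr n ^ q * rr (m - n)) := fun m =>
      Summable.tsum_finsetSum (fun _ _ => ENNReal.summable)
    simp_rw [e]
    rw [tsum_swap]
    congr 1; ext n
    rw [← FF, ← ENNReal.tsum_mul_left]
    congr 1; ext j
    rw [← ENNReal.tsum_mul_left]
    congr 1; ext i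
    rw [← ENNReal.ofReal_mul (pow_nonneg (rr_nonneg _) _), show n + 1 + j - n = j + 1 by omega]
    congr 1; ring
  have s3 : C = ∑' n, ENNReal.ofReal (rr n ^ q * hh n) * TT 2 n := by
    have e : ∀ k m, ∑ n ∈ Finset.range m,
        ENNReal.ofReal (rr k ^ 2 * rr m ^ q * (if n = 0 then 0 else rr (m - n)))
        = ENNReal.ofReal (rr m ^ q * hh m) * ENNReal.ofReal (rr k ^ 2) := by
      intro k m
      have n1 := rr_nonneg k
      have n2 := rr_nonneg m
      have n3 := hh_nonneg m
      rw [← ENNReal.ofReal_sum_of_nonneg (fun n _ => mul_nonneg (by positivity) (n0 m n)),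
        ← ENNReal.ofReal_mul (by positivity), ← Finset.mul_sum]
      have : ∑ n ∈ Finset.range m, (if n = 0 then 0 else rr (m - n)) = hh m := by
        rcases m with _ | m
        · simp [hh]
        rw [Finset.sum_range_succ', ← refl_sum]
        simp
      rw [this]
      congr 1; ring
    rw [hC]
    simp_rw [e]
    rw [tsum_swap]
    simp_rw [ENNReal.tsum_mul_left]
    rfl
  have s4 : C ≠ ⊤ := by
    have : C ≤ ∑' n, ENNReal.ofReal (rr n ^ 2 * hh (n + 1)) * ∑' k, ENNReal.ofReal (rr k ^ 2) := by
      rw [s3]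
      refine ENNReal.tsum_le_tsum fun n => ?_
      refine mul_le_mul' (ENNReal.ofReal_le_ofReal ?_) ?_
      · refine mul_le_mul (r_pow_le n q hq) ?_ (hh_nonneg _) (pow_nonneg (rr_nonneg _) _)
        rw [hh_succ]
        linarith [rr_nonneg n]
      · exact ENNReal.tsum_comp_le_tsum_of_injective
          (f := fun k : ℕ => n + 1 + k) (fun a b h => by simpa using h)
          (fun k => ENNReal.ofReal (rr k ^ 2))
    rw [ENNReal.tsum_mul_right] at this
    exact ne_top_of_le_ne_top (ENNReal.mul_ne_top FH r2_ne_top) this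
  have s5 : B = Z2 3 q + Z2 2 (q + 1) + C := by
    rw [s2, s3, Z2_swap, Z2_swap, ← ENNReal.tsum_add, ← ENNReal.tsum_add]
    congr 1; ext n
    have n1 := rr_nonneg n
    rw [hh_succ, ENNReal.ofReal_add (hh_nonneg _) n1, pow_succ, ENNReal.ofReal_mul (by positivity),
      ENNReal.ofReal_mul (by positivity)]
    ring
  exact (ENNReal.add_left_inj s4).1 (s1.trans s5)

theorem sum_ab2_and_2bc (u : ℕ) (hu : 3 ≤ u) (q : ℕ) (hq : q = u - 1) :
    ((∑ a ∈ Finset.Icc 2 (u - 1), mzv ![a, u - a, 2])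
        = mzv ![u, 2] + mzv ![q, 3] - mzv ![q, 2, 1])
    ∧ ((∑ b ∈ Finset.Icc 1 (u - 1), mzv ![2, b, u - b])
        = mzv ![3, q] + mzv ![2, u]) := by
  obtain rfl : u = q + 1 := by omega
  have hq2 : 2 ≤ q := by omega
  rw [show q + 1 - 1 = q by omega]
  constructor
  · have h := part1 q hq2
    have t1 := Z2_ne_top (q + 1) 2 (by omega) le_rfl
    have t2 := Z2_ne_top q 3 hq2 (by omega)
    have t3 : ∑ a ∈ Finset.Icc 2 q, Z3 a (q + 1 - a) 2 + Z3 q 2 1 ≠ ⊤ := by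
      rw [h]; exact ENNReal.add_ne_top.2 ⟨t1, t2⟩
    obtain ⟨t4, t5⟩ := ENNReal.add_ne_top.1 t3
    have h' := congrArg ENNReal.toReal h
    rw [ENNReal.toReal_add t4 t5, ENNReal.toReal_add t1 t2,
      ENNReal.toReal_sum (ENNReal.sum_ne_top.1 t4)] at h'
    rw [mzv_two _ _ (by omega), mzv_two _ _ (by omega), mzv_three _ _ _ (by omega), ← h',
      Finset.sum_congr rfl fun a _ => mzv_three a (q + 1 - a) 2 (by omega)]
    ring
  · have h := part2 q hq2
    have t1 := Z2_ne_top 3 q (by omega) hq2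
    have t2 := Z2_ne_top 2 (q + 1) le_rfl (by omega)
    have t4 : ∑ b ∈ Finset.Icc 1 q, Z3 2 b (q + 1 - b) ≠ ⊤ := by
      rw [h]; exact ENNReal.add_ne_top.2 ⟨t1, t2⟩
    have h' := congrArg ENNReal.toReal h
    rw [ENNReal.toReal_add t1 t2, ENNReal.toReal_sum (ENNReal.sum_ne_top.1 t4)] at h'
    rw [mzv_two _ _ (by omega), mzv_two _ _ (by omega), ← h']
    refine Finset.sum_congr rfl fun b hb => mzv_three 2 b (q + 1 - b) ?_
    simp at hb
    omega
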